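/- arXiv:1311.1723 — 2 statements merged into one kernel-verified Lean document; each statement's English description precedes it below -/
import Mathlib

section
/- Any realization of Algorithm RFD on an input of length n with rescale partition R satisfies |R| − 2 ≤ n / ⌊(1−c)L⌋. -/
open Finset

/-- One call to `Update`: if the total would exceed `T`, rescale first
(replace each count `s i` by `max 1 ⌊cf * s i⌋`), then add `d` to the count of `x`. -/
noncomputable def RFDupdate {N : ℕ} (cf : ℝ) (d T : ℕ) (s : Fin N → ℕ) (x : Fin N) : Fin N → ℕ :=
  let s' : Fin N → ℕ :=
    if T < (∑ i, s i) + d then (fun i => max 1 ⌊cf * (s i : ℝ)⌋₊) else s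
  fun i => if i = x then s' i + d else s' i

/-- State (counts) of Algorithm RFD after `k` update steps on the input sequence `xs`
(0-indexed: the `k`-th step processes symbol `xs (k-1)`). -/
noncomputable def RFDcounts {N : ℕ} (cf : ℝ) (d T : ℕ) (s0 : Fin N → ℕ) (xs : ℕ → Fin N) : ℕ → Fin N → ℕ
  | 0 => s0
  | k + 1 => RFDupdate cf d T (RFDcounts cf d T s0 xs k) (xs k)

/-- Total counter `t` after `k` update steps. -/
noncomputable def RFDtotal {N : ℕ} (cf : ℝ) (d T : ℕ) (s0 : Fin N → ℕ) (xs : ℕ → Fin N) (k : ℕ) : ℕ :=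
  ∑ i, RFDcounts cf d T s0 xs k i

/-- A rescale takes place in step `k ≥ 1` iff at the beginning of step `k`
the total plus `d` exceeds `T`. -/
def RFDrescaleAt {N : ℕ} (cf : ℝ) (d T : ℕ) (s0 : Fin N → ℕ) (xs : ℕ → Fin N) (k : ℕ) : Prop :=
  1 ≤ k ∧ T < RFDtotal cf d T s0 xs (k - 1) + d

/-- `P` is a partition of the integer interval `[a,b]` into consecutive closed intervals,
listed in order; an interval `[i,j]` is represented by the pair `(i,j)`. -/
def ConsecPartition (a b : ℕ) (P : List (ℕ × ℕ)) : Prop :=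
  P ≠ [] ∧ P.head?.map Prod.fst = some a ∧ P.getLast?.map Prod.snd = some b ∧
    (∀ p ∈ P, p.1 ≤ p.2) ∧ P.Chain' (fun p q => q.1 = p.2 + 1)

/-- `P` is the rescale partition of `[a,b]`: a partition into consecutive intervals `[i,j]`
such that no rescale occurs at steps `i,…,j-1`, and a rescale occurs at step `j` whenever
`j < b` (for the last interval, a rescale at its last step is optional). -/
def RFDrescalePartition {N : ℕ} (cf : ℝ) (d T : ℕ) (s0 : Fin N → ℕ) (xs : ℕ → Fin N)
    (a b : ℕ) (P : List (ℕ × ℕ)) : Prop :=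
  ConsecPartition a b P ∧
    (∀ p ∈ P, ∀ k, p.1 ≤ k → k < p.2 → ¬ RFDrescaleAt cf d T s0 xs k) ∧
    (∀ p ∈ P, p.2 < b → RFDrescaleAt cf d T s0 xs p.2)

/-- The probability `RFD(x; x^k)` that Algorithm RFD assigns to symbol `x` after `k` steps. -/
noncomputable def RFDprob {N : ℕ} (cf : ℝ) (d T : ℕ) (s0 : Fin N → ℕ) (xs : ℕ → Fin N)
    (k : ℕ) (x : Fin N) : ℝ :=
  (RFDcounts cf d T s0 xs k x : ℝ) / (RFDtotal cf d T s0 xs k : ℝ)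

/-- Ideal code length (in bits) of Algorithm RFD on steps `a,…,b` (1-indexed steps;
step `k` encodes symbol `xs (k-1)` using the prediction after `k-1` steps). -/
noncomputable def RFDcodeLen {N : ℕ} (cf : ℝ) (d T : ℕ) (s0 : Fin N → ℕ) (xs : ℕ → Fin N)
    (a b : ℕ) : ℝ :=
  -∑ k ∈ Finset.Icc a b, Real.logb 2 (RFDprob cf d T s0 xs (k - 1) (xs (k - 1)))

/-- Ideal code length (in bits) of a fixed distribution `p` on steps `a,…,b`. -/
noncomputable def distCodeLen {N : ℕ} (p : Fin N → ℝ) (xs : ℕ → Fin N) (a b : ℕ) : ℝ :=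
  -∑ k ∈ Finset.Icc a b, Real.logb 2 (p (xs (k - 1)))

section RFD

variable {N d T : ℕ} {cf : ℝ} {s0 : Fin N → ℕ} {xs : ℕ → Fin N}

theorem RFDtotal_succ_of_le (k : ℕ) (h : RFDtotal cf d T s0 xs k + d ≤ T) :
    RFDtotal cf d T s0 xs (k + 1) = RFDtotal cf d T s0 xs k + d := by
  have h' : ¬ T < (∑ i, RFDcounts cf d T s0 xs k i) + d := not_lt.mpr h
  simp only [RFDtotal, RFDcounts, RFDupdate, if_neg h']
  have := Finset.sum_add_distrib (s := Finset.univ) (f := RFDcounts cf d T s0 xs k)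
    (g := fun i => if i = xs k then d else 0)
  rw [Finset.sum_ite_eq' Finset.univ (xs k) (fun _ => d), if_pos (Finset.mem_univ _)] at this
  rw [← this]
  refine Finset.sum_congr rfl fun i _ => ?_
  split_ifs <;> simp

theorem RFDtotal_succ_of_lt (k : ℕ) (h : T < RFDtotal cf d T s0 xs k + d) :
    RFDtotal cf d T s0 xs (k + 1) =
      (∑ i, max 1 ⌊cf * (RFDcounts cf d T s0 xs k i : ℝ)⌋₊) + d := by
  have h' : T < (∑ i, RFDcounts cf d T s0 xs k i) + d := h
  simp only [RFDtotal, RFDcounts, RFDupdate, if_pos h']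
  have := Finset.sum_add_distrib (s := Finset.univ)
    (f := fun i => max 1 ⌊cf * (RFDcounts cf d T s0 xs k i : ℝ)⌋₊)
    (g := fun i => if i = xs k then d else 0)
  rw [Finset.sum_ite_eq' Finset.univ (xs k) (fun _ => d), if_pos (Finset.mem_univ _)] at this
  rw [← this]
  refine Finset.sum_congr rfl fun i _ => ?_
  split_ifs <;> simp

theorem RFDcounts_pos (hs0 : ∀ x, 1 ≤ s0 x) (k : ℕ) (i : Fin N) :
    1 ≤ RFDcounts cf d T s0 xs k i := by
  induction k generalizing i with
  | zero => exact hs0 i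
  | succ k ih =>
    have := ih i
    simp only [RFDcounts, RFDupdate]
    split_ifs <;> beta_reduce <;> omega

/-- A single rescaled count exceeds `1` by at most the factor `cf` of the old excess. -/
theorem max_one_floor_mul_le (hc0 : 0 ≤ cf) (hc1 : cf ≤ 1) {s : ℕ} (hs : 1 ≤ s) :
    ((max 1 ⌊cf * (s : ℝ)⌋₊ : ℕ) : ℝ) ≤ 1 + cf * ((s : ℝ) - 1) := by
  have hs' : (1 : ℝ) ≤ s := by exact_mod_cast hs
  have hf : (⌊cf * (s : ℝ)⌋₊ : ℝ) ≤ cf * s := Nat.floor_le (by positivity)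
  rw [Nat.cast_max, Nat.cast_one]
  refine max_le ?_ ?_
  · nlinarith
  · linarith

theorem RFDtotal_succ_le_of_rescale (hc0 : 0 ≤ cf) (hc1 : cf ≤ 1) (hs0 : ∀ x, 1 ≤ s0 x) (k : ℕ)
    (h : T < RFDtotal cf d T s0 xs k + d) :
    (RFDtotal cf d T s0 xs (k + 1) : ℝ) ≤
      N + cf * ((RFDtotal cf d T s0 xs k : ℝ) - N) + d := by
  rw [RFDtotal_succ_of_lt k h]
  have := Finset.sum_le_sum fun i (_ : i ∈ Finset.univ) =>
    max_one_floor_mul_le hc0 hc1 (RFDcounts_pos (cf := cf) (d := d) (T := T) (xs := xs) hs0 k i)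
  rw [Finset.sum_add_distrib, ← Finset.mul_sum, Finset.sum_sub_distrib] at this
  simp only [Finset.sum_const, Finset.card_univ, Fintype.card_fin, nsmul_eq_mul, mul_one] at this
  simp only [RFDtotal]
  push_cast at this ⊢
  linarith

theorem RFDtotal_le (hc0 : 0 ≤ cf) (hc1 : cf ≤ 1)
    (hT : (d : ℝ) ≤ (1 - cf) * ((T : ℝ) - N)) (hs0 : ∀ x, 1 ≤ s0 x) (hsum : ∑ x, s0 x ≤ T)
    (k : ℕ) : RFDtotal cf d T s0 xs k ≤ T := by
  induction k with
  | zero => exact hsum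
  | succ k ih =>
    by_cases h : T < RFDtotal cf d T s0 xs k + d
    · have hr := RFDtotal_succ_le_of_rescale hc0 hc1 hs0 k h
      have ih' : (RFDtotal cf d T s0 xs k : ℝ) ≤ T := by exact_mod_cast ih
      have := mul_le_mul_of_nonneg_left ih' hc0
      have : (RFDtotal cf d T s0 xs (k + 1) : ℝ) ≤ T := by linarith
      exact_mod_cast this
    · rw [RFDtotal_succ_of_le k (not_lt.mp h)]
      exact not_lt.mp h

theorem RFDtotal_add_of_forall_not_rescaleAt (j m : ℕ)
    (h : ∀ i, j < i → i ≤ j + m → ¬ RFDrescaleAt cf d T s0 xs i) :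
    RFDtotal cf d T s0 xs (j + m) = RFDtotal cf d T s0 xs j + m * d := by
  induction m with
  | zero => simp
  | succ m ih =>
    have hm := h (j + m + 1) (by omega) (by omega)
    have hle : RFDtotal cf d T s0 xs (j + m) + d ≤ T := by
      by_contra hlt
      exact hm ⟨by omega, not_le.mp hlt⟩
    rw [← add_assoc, RFDtotal_succ_of_le _ hle, ih fun i h1 h2 => h i h1 (by omega)]
    ring

/-- Consecutive rescales are at least `⌊(1 - cf) * ((T - N) / d)⌋₊` steps apart. -/
theorem RFDrescaleAt_gap (hd : 1 ≤ d) (hc0 : 0 ≤ cf) (hc1 : cf ≤ 1)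
    (hT : (d : ℝ) ≤ (1 - cf) * ((T : ℝ) - N)) (hs0 : ∀ x, 1 ≤ s0 x) (hsum : ∑ x, s0 x ≤ T)
    {j k : ℕ} (hjk : j < k) (hj : RFDrescaleAt cf d T s0 xs j)
    (hk : RFDrescaleAt cf d T s0 xs k)
    (h : ∀ i, j < i → i < k → ¬ RFDrescaleAt cf d T s0 xs i) :
    j + ⌊(1 - cf) * (((T : ℝ) - N) / d)⌋₊ ≤ k := by
  obtain ⟨j, rfl⟩ : ∃ j', j = j' + 1 := ⟨j - 1, by have := hj.1; omega⟩
  obtain ⟨m, rfl⟩ : ∃ m, k = j + 1 + m + 1 := ⟨k - (j + 2), by omega⟩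
  have hr := RFDtotal_succ_le_of_rescale hc0 hc1 hs0 j hj.2
  have hle : (RFDtotal cf d T s0 xs j : ℝ) ≤ T := by
    exact_mod_cast RFDtotal_le hc0 hc1 hT hs0 hsum j
  have hadd := RFDtotal_add_of_forall_not_rescaleAt (j + 1) m fun i h1 h2 => h i h1 (by omega)
  have hlt : T < RFDtotal cf d T s0 xs (j + 1 + m) + d := hk.2
  rw [hadd] at hlt
  have hlt' : (T : ℝ) < RFDtotal cf d T s0 xs (j + 1) + m * d + d := by exact_mod_cast hlt
  have hd' : (0 : ℝ) < d := by exact_mod_cast hd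
  have hmul := mul_le_mul_of_nonneg_left hle hc0
  have : (1 - cf) * (((T : ℝ) - N) / d) < ((m + 2 : ℕ) : ℝ) := by
    rw [← mul_div_assoc, div_lt_iff₀ hd']
    push_cast
    linarith
  have := (Nat.floor_lt' (by omega)).mpr this
  omega

end RFD

/-- If `A` marks the right ends of all but the last interval of a consecutive partition, and
marked points without a marked point in between are at least `F` apart, then a partition preceded
by a marked point spans at least `F` integers per interval other than the last. -/
theorem length_mul_add_le_of_gap {A : ℕ → Prop} {F b : ℕ}
    (hgap : ∀ j k, j < k → A j → A k → (∀ i, j < i → i < k → ¬ A i) → j + F ≤ k)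
    (P : List (ℕ × ℕ)) (p : ℕ × ℕ)
    (hlast : (p :: P).getLast?.map Prod.snd = some b)
    (hle : ∀ q ∈ p :: P, q.1 ≤ q.2)
    (hchain : (p :: P).IsChain fun p q => q.1 = p.2 + 1)
    (hnot : ∀ q ∈ p :: P, ∀ k, q.1 ≤ k → k < q.2 → ¬ A k)
    (hend : ∀ q ∈ p :: P, q.2 < b → A q.2) :
    p.1 ≤ b ∧ ∀ j, p.1 = j + 1 → A j → P.length * F + p.1 ≤ b := by
  induction P generalizing p with
  | nil =>
    have h1 := hle p (by simp)
    simp only [List.getLast?_singleton, Option.map_some, Option.some.injEq] at hlast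
    subst hlast
    exact ⟨h1, fun _ _ _ => by simpa using h1⟩
  | cons q P ih =>
    rw [List.isChain_cons_cons] at hchain
    rw [List.getLast?_cons_cons] at hlast
    obtain ⟨hqb, hq⟩ := ih q hlast (fun r hr => hle r (List.mem_cons_of_mem _ hr)) hchain.2
      (fun r hr => hnot r (List.mem_cons_of_mem _ hr))
      (fun r hr => hend r (List.mem_cons_of_mem _ hr))
    have hp := hle p List.mem_cons_self
    have hpq := hchain.1
    have hA := hend p List.mem_cons_self (by omega)
    refine ⟨by omega, fun j hj hAj => ?_⟩
    have h1 := hq p.2 hpq hA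
    have h2 := hgap j p.2 (by omega) hAj hA fun i hi hi' =>
      hnot p List.mem_cons_self i (by omega) hi'
    rw [List.length_cons, Nat.succ_mul]
    omega

/-- Lemma 3: any realization of Algorithm RFD on an input of length `n`
with rescale partition `R` satisfies `|R| - 2 ≤ n / ⌊(1-c)L⌋`, where `L = (T - N)/d`. -/
theorem stmt2 (N d T : ℕ) (cf : ℝ) (hN : 1 < N)
    (s0 : Fin N → ℕ) (xs : ℕ → Fin N)
    (hd : 1 ≤ d) (hc0 : 0 ≤ cf) (hc1 : cf < 1)
    (hT : (d : ℝ) ≤ (1 - cf) * ((T : ℝ) - N))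
    (hs0 : ∀ x, 1 ≤ s0 x) (hsum : ∑ x, s0 x ≤ T)
    (n : ℕ) (hn : 1 ≤ n)
    (R : List (ℕ × ℕ)) (hR : RFDrescalePartition cf d T s0 xs 1 n R)
    (L : ℝ) (hL : L = ((T : ℝ) - N) / d) :
    (R.length : ℝ) - 2 ≤ (n : ℝ) / (⌊(1 - cf) * L⌋₊ : ℝ) := by
  subst hL
  obtain ⟨⟨hne, -, hlast, hle, hchain⟩, hnot, hend⟩ := hR
  have hd' : (0 : ℝ) < d := by exact_mod_cast hd
  have hgap : ∀ j k, j < k → RFDrescaleAt cf d T s0 xs j → RFDrescaleAt cf d T s0 xs k →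
      (∀ i, j < i → i < k → ¬ RFDrescaleAt cf d T s0 xs i) →
      j + ⌊(1 - cf) * (((T : ℝ) - N) / d)⌋₊ ≤ k :=
    fun j k hjk hj hk h => RFDrescaleAt_gap hd hc0 hc1.le hT hs0 hsum hjk hj hk h
  have hF : 1 ≤ ⌊(1 - cf) * (((T : ℝ) - N) / d)⌋₊ := by
    rw [Nat.one_le_floor_iff, ← mul_div_assoc, le_div_iff₀ hd']
    linarith
  generalize ⌊(1 - cf) * (((T : ℝ) - N) / d)⌋₊ = F at hgap hF ⊢
  have hF' : (0 : ℝ) < F := by exact_mod_cast hF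
  have hnF : (0 : ℝ) ≤ (n : ℝ) / F := by positivity
  match R, hne with
  | [p], _ =>
    norm_num
    linarith
  | p :: q :: P, _ =>
    rw [List.getLast?_cons_cons] at hlast
    have hchain' := List.isChain_cons_cons.mp hchain
    obtain ⟨hqn, hq⟩ := length_mul_add_le_of_gap hgap P q hlast
      (fun r hr => hle r (List.mem_cons_of_mem _ hr)) hchain'.2
      (fun r hr => hnot r (List.mem_cons_of_mem _ hr))
      (fun r hr => hend r (List.mem_cons_of_mem _ hr))
    have hpq := hchain'.1
    have hlen := hq p.2 hpq (hend p List.mem_cons_self (by omega))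
    have hlen' : P.length * F ≤ n := by omega
    rw [le_div_iff₀ hF']
    simp only [List.length_cons]
    push_cast
    have : (P.length : ℝ) * F ≤ n := by exact_mod_cast hlen'
    linarith
end

section
/- Consider a realization of Algorithm RFD on x^n whose rescale partition is {[1,n]}. Let c(x) denote the number of occurrences of symbol x in x^n, let M be the number of distinct symbols occurring in x^n, let t0 = Σ_{y∈X} s0(y), and let s0 be a positive real with s0 ≤ s0(x) for all x ∈ X. Then ℓ(x^n; RFD) ≤ log₂ (n choose c(1),…,c(N)) + (M − 1 + (t0 − s0)/d)·log₂ n + log₂( (t0/d)·e^{t0/d} / ((s0/d)^M · M^{M − s0/d}) ). -/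
open Finset

/-- The product `∏_{k=1}^{m} (1 + s / k)`. -/
noncomputable def gammaProd (s : ℝ) (m : ℕ) : ℝ := ∏ k ∈ range m, (1 + s / ((k : ℝ) + 1))

theorem gammaProd_pos {s : ℝ} (hs : 0 ≤ s) (m : ℕ) : 0 < gammaProd s m :=
  prod_pos fun _ _ => by positivity

theorem gammaProd_add_le {s : ℝ} (hs : 0 ≤ s) (m p : ℕ) :
    gammaProd s (m + p) ≤ gammaProd s m * gammaProd s p := by
  unfold gammaProd
  rw [prod_range_add]
  refine mul_le_mul_of_nonneg_left ?_ (prod_nonneg fun _ _ => by positivity)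
  refine prod_le_prod (fun _ _ => by positivity) fun k _ => ?_
  gcongr
  linarith [(Nat.cast_nonneg m : (0 : ℝ) ≤ m)]

theorem gammaProd_sum_le {ι : Type*} {s : ℝ} (hs : 0 ≤ s) (S : Finset ι) (f : ι → ℕ) :
    gammaProd s (∑ x ∈ S, f x) ≤ ∏ x ∈ S, gammaProd s (f x) := by
  classical
  induction S using Finset.induction_on with
  | empty => simp [gammaProd]
  | insert a S ha ih =>
    rw [sum_insert ha, prod_insert ha]
    exact (gammaProd_add_le hs _ _).trans
      (mul_le_mul_of_nonneg_left ih (gammaProd_pos hs _).le)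

theorem sum_inv_le_one_add_log (m : ℕ) :
    ∑ k ∈ range m, 1 / ((k : ℝ) + 1) ≤ 1 + Real.log ((m : ℝ) + 1) := by
  have h := harmonic_le_one_add_log m
  have h2 : Real.log m ≤ Real.log ((m : ℝ) + 1) := by
    rcases Nat.eq_zero_or_pos m with rfl | hm
    · simp
    · exact Real.log_le_log (by exact_mod_cast hm) (by linarith)
  simp only [harmonic, Rat.cast_sum, Rat.cast_inv, Rat.cast_natCast] at h
  push_cast at h
  simp only [one_div]
  linarith

theorem gammaProd_le_mul {s t : ℝ} (hs : 0 ≤ s) (hst : s ≤ t) (m : ℕ) :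
    gammaProd t m ≤ gammaProd s m * (Real.exp (t - s) * ((m : ℝ) + 1) ^ (t - s)) := by
  have h1 : gammaProd t m ≤
      gammaProd s m * ∏ k ∈ range m, Real.exp ((t - s) * (1 / ((k : ℝ) + 1))) := by
    unfold gammaProd
    rw [← prod_mul_distrib]
    refine prod_le_prod (fun _ _ => by have := hs.trans hst; positivity) fun k _ => ?_
    have hk : (0 : ℝ) < (k : ℝ) + 1 := by positivity
    have hts : 0 ≤ t - s := sub_nonneg.2 hst
    calc 1 + t / ((k : ℝ) + 1)
        ≤ (1 + s / ((k : ℝ) + 1)) * ((t - s) * (1 / ((k : ℝ) + 1)) + 1) := by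
          have : 0 ≤ s / ((k : ℝ) + 1) * ((t - s) * (1 / ((k : ℝ) + 1))) := by positivity
          have e : t / ((k : ℝ) + 1) = s / ((k : ℝ) + 1) + (t - s) * (1 / ((k : ℝ) + 1)) := by
            ring
          rw [e]
          nlinarith
      _ ≤ _ := mul_le_mul_of_nonneg_left (Real.add_one_le_exp _) (by positivity)
  refine h1.trans (mul_le_mul_of_nonneg_left ?_ (gammaProd_pos hs m).le)
  rw [← Real.exp_sum, ← mul_sum, Real.rpow_def_of_pos (by positivity), ← Real.exp_add]
  refine Real.exp_le_exp.2 ?_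
  have := mul_le_mul_of_nonneg_left (sum_inv_le_one_add_log m) (sub_nonneg.2 hst)
  linarith

theorem gammaProd_le {s : ℝ} (hs : 0 ≤ s) (m : ℕ) :
    gammaProd s m ≤ Real.exp s * ((m : ℝ) + 1) ^ s := by
  simpa [gammaProd] using gammaProd_le_mul le_rfl hs m

/-- The rising factorial of `s` in terms of `gammaProd`. -/
theorem prod_range_succ_add_eq (s : ℝ) (m : ℕ) :
    ∏ k ∈ range (m + 1), (s + (k : ℝ)) = s * (m.factorial : ℝ) * gammaProd s m := by
  induction m with
  | zero => simp [gammaProd]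
  | succ m ih =>
    have h : gammaProd s (m + 1) = gammaProd s m * (1 + s / ((m : ℝ) + 1)) := prod_range_succ _ _
    rw [prod_range_succ, ih, h, Nat.factorial_succ]
    push_cast
    field_simp
    ring

/-- The inequality of arithmetic and geometric means for natural numbers. -/
theorem prod_natCast_le_pow {ι : Type*} (S : Finset ι) (f : ι → ℕ) (hS : S.Nonempty) :
    ∏ x ∈ S, (f x : ℝ) ≤ (((∑ x ∈ S, f x : ℕ) : ℝ) / (#S : ℝ)) ^ #S := by
  have hc : (0 : ℝ) < #S := by exact_mod_cast hS.card_pos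
  have h := Real.geom_mean_le_arith_mean S (fun _ => 1) (fun x => (f x : ℝ))
    (fun _ _ => zero_le_one) (by simpa using hS) (fun _ _ => by positivity)
  simp only [Real.rpow_one, one_mul, sum_const, nsmul_eq_mul, mul_one] at h
  have h0 : (0 : ℝ) ≤ ∏ x ∈ S, (f x : ℝ) := prod_nonneg fun _ _ => by positivity
  calc ∏ x ∈ S, (f x : ℝ) = ((∏ x ∈ S, (f x : ℝ)) ^ ((#S : ℝ)⁻¹)) ^ #S := by
        rw [Real.rpow_inv_natCast_pow h0 hS.card_pos.ne']
    _ ≤ _ := by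
        push_cast
        exact pow_le_pow_left₀ (by positivity) h _

/-- Regrouping a product along a sequence by the symbols of the sequence. -/
theorem prod_range_occurrence {N : ℕ} (f : Fin N → ℕ → ℝ) (xs : ℕ → Fin N) (n : ℕ) :
    ∏ k ∈ range n, f (xs k) (#{i ∈ range k | xs i = xs k}) =
      ∏ x, ∏ j ∈ range (#{i ∈ range n | xs i = x}), f x j := by
  induction n with
  | zero => simp
  | succ n ih =>
    rw [prod_range_succ, ih, ← mul_prod_erase univ _ (mem_univ (xs n)),
      ← mul_prod_erase univ _ (mem_univ (xs n))]
    have h1 : #{i ∈ range (n + 1) | xs i = xs n} = #{i ∈ range n | xs i = xs n} + 1 := by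
      rw [range_add_one, filter_insert, if_pos rfl, card_insert_of_notMem (by simp)]
    have h2 : ∀ x ∈ univ.erase (xs n),
        ∏ j ∈ range (#{i ∈ range (n + 1) | xs i = x}), f x j =
          ∏ j ∈ range (#{i ∈ range n | xs i = x}), f x j := by
      intro x hx
      rw [range_add_one, filter_insert, if_neg (ne_of_mem_erase hx).symm]
    rw [prod_congr rfl h2, h1, prod_range_succ]
    ring

theorem RFDcounts_eq_of_no_rescale {N d T : ℕ} {cf : ℝ} {s0 : Fin N → ℕ} {xs : ℕ → Fin N} {n : ℕ}
    (hnores : ∀ k, 1 ≤ k → k < n → ¬ RFDrescaleAt cf d T s0 xs k) {k : ℕ} (hk : k < n)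
    (x : Fin N) :
    RFDcounts cf d T s0 xs k x = s0 x + d * #{i ∈ range k | xs i = x} := by
  induction k generalizing x with
  | zero => simp [RFDcounts]
  | succ k ih =>
    have h := hnores (k + 1) (by omega) hk
    have h' : ¬ T < (∑ i, RFDcounts cf d T s0 xs k i) + d := fun hlt =>
      h ⟨by omega, by simpa [RFDtotal] using hlt⟩
    simp only [RFDcounts, RFDupdate, if_neg h']
    rw [ih (by omega), range_add_one, filter_insert]
    by_cases hx : x = xs k
    · rw [if_pos hx, if_pos hx.symm, card_insert_of_notMem (by simp)]
      ring
    · rw [if_neg hx, if_neg (Ne.symm hx)]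

theorem RFDtotal_eq_of_no_rescale {N d T : ℕ} {cf : ℝ} {s0 : Fin N → ℕ} {xs : ℕ → Fin N} {n : ℕ}
    (hnores : ∀ k, 1 ≤ k → k < n → ¬ RFDrescaleAt cf d T s0 xs k) {k : ℕ} (hk : k < n) :
    RFDtotal cf d T s0 xs k = ∑ x, s0 x + d * k := by
  have h : ∑ x, #{i ∈ range k | xs i = x} = k := by
    rw [← card_eq_sum_card_fiberwise (fun _ _ => mem_univ _), card_range]
  simp only [RFDtotal, RFDcounts_eq_of_no_rescale hnores hk, sum_add_distrib, ← mul_sum, h]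

/-- The code length as the logarithm of a quotient of rising factorials. -/
theorem RFDcodeLen_eq_of_no_rescale {N d T : ℕ} {cf : ℝ} {s0 : Fin N → ℕ} {xs : ℕ → Fin N}
    {n : ℕ} (hd : 1 ≤ d) (hs0 : ∀ x, 1 ≤ s0 x)
    (hnores : ∀ k, 1 ≤ k → k < n → ¬ RFDrescaleAt cf d T s0 xs k) :
    RFDcodeLen cf d T s0 xs 1 n =
      Real.logb 2 ((∏ k ∈ range n, (((∑ y, s0 y : ℕ) : ℝ) / d + k)) /
        ∏ x, ∏ j ∈ range (#{i ∈ range n | xs i = x}), ((s0 x : ℝ) / d + j)) := by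
  have hd' : (0 : ℝ) < d := by exact_mod_cast hd
  have hpos : ∀ x, (0 : ℝ) < (s0 x : ℝ) / d := fun x =>
    div_pos (by exact_mod_cast hs0 x) hd'
  have hT : ∀ k < n, (0 : ℝ) < ((∑ y, s0 y : ℕ) : ℝ) / d + k := by
    intro k _
    have : 0 < ∑ y, s0 y :=
      (hs0 (xs 0)).trans (single_le_sum (f := s0) (fun _ _ => Nat.zero_le _) (mem_univ (xs 0)))
    have : (0 : ℝ) < ((∑ y, s0 y : ℕ) : ℝ) := by exact_mod_cast this
    positivity
  have hprob : ∀ k ∈ range n, RFDprob cf d T s0 xs k (xs k) =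
      ((s0 (xs k) : ℝ) / d + (#{i ∈ range k | xs i = xs k} : ℕ)) /
        (((∑ y, s0 y : ℕ) : ℝ) / d + k) := by
    intro k hk
    have hk := mem_range.1 hk
    have := hT k hk
    rw [RFDprob, RFDcounts_eq_of_no_rescale hnores hk, RFDtotal_eq_of_no_rescale hnores hk]
    rw [← div_div_div_cancel_right₀ hd'.ne']
    congr 1 <;> · push_cast; field_simp
  have hsum : RFDcodeLen cf d T s0 xs 1 n =
      -∑ k ∈ range n, Real.logb 2 (RFDprob cf d T s0 xs k (xs k)) := by
    rw [RFDcodeLen, range_eq_Ico, ← sum_Ico_add_right_sub_eq 0 n 1, zero_add]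
    rfl
  rw [hsum, sum_congr rfl fun k hk => by rw [hprob k hk], ← Real.logb_prod, ← Real.logb_inv,
    prod_div_distrib, inv_div,
    prod_range_occurrence (fun x j => (s0 x : ℝ) / d + j)]
  intro k hk
  have h1 := hT k (mem_range.1 hk)
  have h2 := hpos (xs k)
  positivity

/-- The key estimate comparing the rising factorial of `t` with those of the individual symbols. -/
theorem gammaProd_mul_prod_le {ι : Type*} (S : Finset ι) (hS : S.Nonempty) (c : ι → ℕ)
    (hc : ∀ x ∈ S, 1 ≤ c x) {m : ℕ} (hm : ∑ x ∈ S, c x = m + 1) {s t : ℝ} (hs : 0 ≤ s)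
    (hst : s ≤ t) :
    gammaProd t m * ∏ x ∈ S, (c x : ℝ) ≤
      ((m : ℝ) + 1) ^ ((#S : ℝ) + t - s) * Real.exp t / (#S : ℝ) ^ ((#S : ℝ) - s) *
        ∏ x ∈ S, gammaProd s (c x - 1) := by
  obtain ⟨p, hp⟩ : ∃ p, #S = p + 1 := ⟨#S - 1, by have := hS.card_pos; omega⟩
  have hsub : ∑ x ∈ S, (c x - 1) + p = m := by
    have : ∑ x ∈ S, (c x - 1) + ∑ x ∈ S, 1 = ∑ x ∈ S, c x := by
      rw [← sum_add_distrib]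
      exact sum_congr rfl fun x hx => Nat.sub_add_cancel (hc x hx)
    rw [hm, ← card_eq_sum_ones, hp] at this
    omega
  set Q := ∏ x ∈ S, gammaProd s (c x - 1)
  have hQ : 0 < Q := prod_pos fun _ _ => gammaProd_pos hs _
  have hp' : (#S : ℝ) = (p : ℝ) + 1 := by rw [hp]; push_cast; ring
  have hSpos : (0 : ℝ) < #S := by rw [hp']; positivity
  have hA : gammaProd s m ≤ Q * (Real.exp s * (#S : ℝ) ^ s) := by
    rw [← hsub, hp']
    refine (gammaProd_add_le hs _ _).trans ?_
    exact mul_le_mul (gammaProd_sum_le hs S _) (gammaProd_le hs p) (gammaProd_pos hs _).le hQ.le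
  have hB := gammaProd_le_mul hs hst m
  have hC := prod_natCast_le_pow S c hS
  rw [hm] at hC
  have hm0 : (0 : ℝ) < (m : ℝ) + 1 := by positivity
  calc gammaProd t m * ∏ x ∈ S, (c x : ℝ)
      ≤ (Q * (Real.exp s * (#S : ℝ) ^ s) * (Real.exp (t - s) * ((m : ℝ) + 1) ^ (t - s))) *
          (((m + 1 : ℕ) : ℝ) / (#S : ℝ)) ^ #S := by
        refine mul_le_mul (hB.trans ?_) hC (prod_nonneg fun _ _ => by positivity) (by positivity)
        gcongr
    _ = _ := by
        have e1 : ((m : ℝ) + 1) ^ ((#S : ℝ) + t - s) =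
            ((m : ℝ) + 1) ^ #S * ((m : ℝ) + 1) ^ (t - s) := by
          rw [add_sub_assoc, Real.rpow_add hm0, Real.rpow_natCast]
        have e2 : (#S : ℝ) ^ ((#S : ℝ) - s) = (#S : ℝ) ^ #S / (#S : ℝ) ^ s := by
          rw [Real.rpow_sub hSpos, Real.rpow_natCast]
        have e3 : Real.exp t = Real.exp s * Real.exp (t - s) := by
          rw [← Real.exp_add]; ring_nf
        have : (0 : ℝ) < (#S : ℝ) ^ s := Real.rpow_pos_of_pos hSpos _
        rw [e1, e2, e3, div_pow]
        push_cast
        field_simp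

/-- The product form of the code length bound. -/
theorem risingFactorial_ratio_le {N : ℕ} (c : Fin N → ℕ) (S : Finset (Fin N)) (hS : S.Nonempty)
    (hmem : ∀ x ∈ S, 1 ≤ c x) (hnot : ∀ x ∉ S, c x = 0) {n : ℕ} (hn : 1 ≤ n)
    (hsum : ∑ x, c x = n) {s t : ℝ} (hs : 0 < s) (hst : s ≤ t) (a : Fin N → ℝ)
    (ha : ∀ x, s ≤ a x) :
    (∏ k ∈ range n, (t + (k : ℝ))) / ∏ x, ∏ j ∈ range (c x), (a x + (j : ℝ)) ≤
      (Nat.multinomial univ c : ℝ) * (n : ℝ) ^ ((#S : ℝ) - 1 + (t - s)) *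
        (t * Real.exp t / (s ^ #S * (#S : ℝ) ^ ((#S : ℝ) - s))) := by
  obtain ⟨m, rfl⟩ : ∃ m, n = m + 1 := ⟨n - 1, by omega⟩
  have ht : 0 < t := hs.trans_le hst
  have hsumS : ∑ x ∈ S, c x = m + 1 := by
    rw [← hsum]
    exact sum_subset (subset_univ S) fun x _ hx => hnot x hx
  have key := gammaProd_mul_prod_le S hS c hmem hsumS hs.le hst
  set Q := ∏ x ∈ S, gammaProd s (c x - 1) with hQdef
  have hQ : 0 < Q := prod_pos fun _ _ => gammaProd_pos hs.le _
  set F := ∏ x ∈ S, ((c x).factorial : ℝ) with hF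
  have hFpos : 0 < F := prod_pos fun _ _ => by positivity
  set C := ∏ x ∈ S, (c x : ℝ) with hC
  have hCpos : 0 < C := prod_pos fun x hx => by exact_mod_cast hmem x hx
  have hmult : F * (Nat.multinomial univ c : ℝ) = ((m : ℝ) + 1) * (m.factorial : ℝ) := by
    have h := Nat.multinomial_spec univ c
    rw [hsum, Nat.factorial_succ] at h
    have hF' : F = ((∏ x, (c x).factorial : ℕ) : ℝ) := by
      rw [hF]
      push_cast
      exact prod_subset (subset_univ S) fun x _ hx => by simp [hnot x hx]
    rw [hF']
    exact_mod_cast h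
  have hden : s ^ #S * F / C * Q ≤ ∏ x, ∏ j ∈ range (c x), (a x + (j : ℝ)) := by
    rw [← prod_subset (subset_univ S) fun x _ hx => by simp [hnot x hx]]
    rw [hF, hC, hQdef, ← prod_const, ← prod_mul_distrib, ← prod_div_distrib, ← prod_mul_distrib]
    refine prod_le_prod (fun x _ => ?_) fun x hx => ?_
    · have := gammaProd_pos hs.le (c x - 1)
      positivity
    · obtain ⟨q, hq⟩ : ∃ q, c x = q + 1 := ⟨c x - 1, by have := hmem x hx; omega⟩
      have e : s * ((c x).factorial : ℝ) / (c x : ℝ) * gammaProd s (c x - 1) =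
          ∏ j ∈ range (c x), (s + (j : ℝ)) := by
        rw [hq, prod_range_succ_add_eq, Nat.factorial_succ]
        simp only [Nat.add_sub_cancel]
        push_cast
        field_simp
      rw [e]
      exact prod_le_prod (fun _ _ => by positivity) fun _ _ => by gcongr; exact ha x
  have hSpos : (0 : ℝ) < #S := by exact_mod_cast hS.card_pos
  have hm0 : (0 : ℝ) < (m : ℝ) + 1 := by positivity
  have hMpow : (0 : ℝ) < (#S : ℝ) ^ ((#S : ℝ) - s) := Real.rpow_pos_of_pos hSpos _
  have hexp : ((m : ℝ) + 1) ^ ((#S : ℝ) + t - s) =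
      ((m : ℝ) + 1) * ((m : ℝ) + 1) ^ ((#S : ℝ) - 1 + (t - s)) := by
    rw [← Real.rpow_one_add' hm0.le]
    · congr 1; ring
    · have : (1 : ℝ) ≤ #S := by exact_mod_cast hS.card_pos
      intro h
      linarith
  have hmult' : (Nat.multinomial univ c : ℝ) = ((m : ℝ) + 1) * (m.factorial : ℝ) / F := by
    rw [eq_div_iff hFpos.ne', mul_comm, hmult]
  have hpos : 0 < s ^ #S * F / C * Q := by positivity
  rw [prod_range_succ_add_eq, div_le_iff₀ (hpos.trans_le hden)]
  refine le_trans ?_ (mul_le_mul_of_nonneg_left hden (by positivity))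
  rw [hexp] at key
  rw [hmult']
  push_cast
  calc t * (m.factorial : ℝ) * gammaProd t m
      = t * (m.factorial : ℝ) / C * (gammaProd t m * C) := by field_simp
    _ ≤ t * (m.factorial : ℝ) / C * _ := mul_le_mul_of_nonneg_left key (by positivity)
    _ = _ := by field_simp

/-- Lemma 5: for a realization of Algorithm RFD whose rescale partition
is `{[1,n]}` (no rescale in steps `1,…,n-1`), with `c(x)` the number of occurrences of `x`
in `x^n`, `M` the number of distinct symbols in `x^n`, `t0 = Σ_y s0(y)` and `s0 ≤ s0(x)`
for all `x`:
`ℓ(x^n; RFD) ≤ log₂ (n choose c(1),…,c(N)) + (M - 1 + (t0 - s0)/d)·log₂ n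
  + log₂( (t0/d)·e^(t0/d) / ((s0/d)^M · M^(M - s0/d)) )`. -/
theorem stmt9 (N d T : ℕ) (cf : ℝ) (hN : 1 < N)
    (s0 : Fin N → ℕ) (xs : ℕ → Fin N)
    (hd : 1 ≤ d) (hc0 : 0 ≤ cf) (hc1 : cf < 1)
    (hT : (d : ℝ) ≤ (1 - cf) * ((T : ℝ) - N))
    (hs0 : ∀ x, 1 ≤ s0 x) (hsum : ∑ x, s0 x ≤ T)
    (n : ℕ) (hn : 1 ≤ n)
    (hnores : ∀ k, 1 ≤ k → k < n → ¬ RFDrescaleAt cf d T s0 xs k)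
    (cnt : Fin N → ℕ)
    (hcnt : ∀ x, cnt x = ((Finset.range n).filter (fun i => xs i = x)).card)
    (M : ℕ) (hM : M = ((Finset.range n).image xs).card)
    (t0 : ℕ) (ht0 : t0 = ∑ y, s0 y)
    (s0r : ℝ) (hs0r : 0 < s0r) (hs0rle : ∀ x, s0r ≤ (s0 x : ℝ)) :
    RFDcodeLen cf d T s0 xs 1 n ≤
      Real.logb 2 (Nat.multinomial Finset.univ cnt : ℝ)
      + ((M : ℝ) - 1 + ((t0 : ℝ) - s0r) / d) * Real.logb 2 n
      + Real.logb 2 (((t0 : ℝ) / d * Real.exp ((t0 : ℝ) / d)) /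
          ((s0r / d) ^ M * (M : ℝ) ^ ((M : ℝ) - s0r / d))) := by
  subst hM ht0
  obtain rfl : cnt = fun x => #{i ∈ range n | xs i = x} := funext hcnt
  have hd' : (0 : ℝ) < d := by exact_mod_cast hd
  have hle : s0r ≤ ((∑ y, s0 y : ℕ) : ℝ) := (hs0rle (xs 0)).trans <| by
    exact_mod_cast single_le_sum (f := s0) (fun _ _ => Nat.zero_le _) (mem_univ (xs 0))
  have ht0 : (0 : ℝ) < ((∑ y, s0 y : ℕ) : ℝ) := hs0r.trans_le hle
  have hS : ((range n).image xs).Nonempty := (nonempty_range_iff.2 (by omega)).image xs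
  have hn0 : (0 : ℝ) < n := by exact_mod_cast hn
  have hM0 : (0 : ℝ) < #((range n).image xs) := by exact_mod_cast hS.card_pos
  have hbound := risingFactorial_ratio_le (fun x => #{i ∈ range n | xs i = x})
    ((range n).image xs) hS
    (fun x hx => by
      obtain ⟨i, hi, hix⟩ := mem_image.1 hx
      exact card_pos.2 ⟨i, mem_filter.2 ⟨hi, hix⟩⟩)
    (fun x hx => by
      rw [card_eq_zero, filter_eq_empty_iff]
      exact fun i hi hix => hx (mem_image.2 ⟨i, hi, hix⟩))
    hn (by rw [← card_eq_sum_card_fiberwise (fun _ _ => mem_univ _), card_range])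
    (div_pos hs0r hd') (div_le_div_of_nonneg_right hle hd'.le) (fun x => (s0 x : ℝ) / d)
    (fun x => div_le_div_of_nonneg_right (hs0rle x) hd'.le)
  rw [← sub_div] at hbound
  have hmult : (0 : ℝ) < (Nat.multinomial univ fun x => #{i ∈ range n | xs i = x} : ℕ) := by
    exact_mod_cast Nat.multinomial_pos _ _
  rw [RFDcodeLen_eq_of_no_rescale hd hs0 hnores, ← Real.logb_rpow_eq_mul_logb_of_pos hn0,
    ← Real.logb_mul hmult.ne' (Real.rpow_pos_of_pos hn0 _).ne', ← Real.logb_mul]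
  · refine Real.logb_le_logb_of_le one_lt_two ?_ hbound
    refine div_pos (prod_pos fun _ _ => by positivity) (prod_pos fun x _ => prod_pos fun _ _ => ?_)
    have : (0 : ℝ) < s0 x := by exact_mod_cast hs0 x
    positivity
  · exact (mul_pos hmult (Real.rpow_pos_of_pos hn0 _)).ne'
  · have := Real.rpow_pos_of_pos hM0 ((#((range n).image xs) : ℝ) - s0r / d)
    positivity
end
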